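/- arXiv:2006.01116 — 2 statements merged into one kernel-verified Lean document; each statement's English description precedes it below -/
import Mathlib

section
/- Let D be a digraph and let V(D) = X ∪ Y be a partition with e(X) = 0. Let X = X₁ ∪ X₂ be a partition of X that minimizes |θ(X₁,X₂)| among all partitions of X. Then Σ_{v∈X with s(v) < |θ(X₁,X₂)|} s(v) ≤ |Y| − |θ(X₁,X₂)|. -/
open Finset

/-- Number of arcs of the digraph `A` directed from a vertex of `S` to a vertex of `T`. -/
def dArcs {V : Type} [Fintype V] [DecidableEq V] (A : V → V → Prop) [DecidableRel A]
    (S T : Finset V) : ℕ :=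
  ((S ×ˢ T).filter fun p => A p.1 p.2).card

/-- Outdegree of `x`. -/
def outDeg {V : Type} [Fintype V] (A : V → V → Prop) [DecidableRel A] (x : V) : ℕ :=
  (Finset.univ.filter fun y => A x y).card

/-- Indegree of `x`. -/
def inDeg {V : Type} [Fintype V] (A : V → V → Prop) [DecidableRel A] (x : V) : ℕ :=
  (Finset.univ.filter fun y => A y x).card

/-- Degree of `x`: outdegree plus indegree. -/
def deg {V : Type} [Fintype V] (A : V → V → Prop) [DecidableRel A] (x : V) : ℕ :=
  outDeg A x + inDeg A x

/-- `s(x) = max{d⁺(x) − d⁻(x), d⁻(x) − d⁺(x)}`. -/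
def sVal {V : Type} [Fintype V] (A : V → V → Prop) [DecidableRel A] (x : V) : ℤ :=
  max ((outDeg A x : ℤ) - (inDeg A x : ℤ)) ((inDeg A x : ℤ) - (outDeg A x : ℤ))

/-- The gap `θ(X₁,X₂) = (e(X₁,Y)+e(Y,X₂)) − (e(X₂,Y)+e(Y,X₁))`. -/
def gap {V : Type} [Fintype V] [DecidableEq V] (A : V → V → Prop) [DecidableRel A]
    (X₁ X₂ Y : Finset V) : ℤ :=
  ((dArcs A X₁ Y : ℤ) + (dArcs A Y X₂ : ℤ)) - ((dArcs A X₂ Y : ℤ) + (dArcs A Y X₁ : ℤ))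

/-- Signs can be chosen greedily so that adding the signed values of `a` to `c`
gives a result of absolute value less than `t`. -/
theorem exists_signs_abs_lt {V : Type} [DecidableEq V] (a : V → ℤ) (t : ℤ) (T : Finset V)
    (hT : ∀ v ∈ T, |a v| < t) (c : ℤ) (hc : |c| < t + ∑ v ∈ T, |a v|) :
    ∃ P : Finset V, |c + ∑ v ∈ T, (if v ∈ P then a v else -a v)| < t := by
  induction T using Finset.induction_on generalizing c with
  | empty => exact ⟨∅, by simpa using hc⟩
  | insert w T hw ih =>
    have hsum : 0 ≤ ∑ v ∈ T, |a v| := sum_nonneg fun _ _ => abs_nonneg _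
    have haw := hT w (mem_insert_self w T)
    rw [sum_insert hw] at hc
    have hT' : ∀ v ∈ T, |a v| < t := fun v hv => hT v (mem_insert_of_mem hv)
    have hor : |c + a w| < t + ∑ v ∈ T, |a v| ∨ |c + -a w| < t + ∑ v ∈ T, |a v| := by
      simp only [abs_lt] at haw hc ⊢
      rcases abs_cases (a w) with h | h <;> omega
    rcases hor with h | h
    · obtain ⟨P, hP⟩ := ih hT' _ h
      refine ⟨insert w P, ?_⟩
      have hcongr : ∑ v ∈ T, (if v ∈ insert w P then a v else -a v)
          = ∑ v ∈ T, (if v ∈ P then a v else -a v) :=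
        sum_congr rfl fun v hv => by
          have : v ≠ w := fun e => hw (e ▸ hv)
          simp [this]
      rw [sum_insert hw, hcongr, if_pos (mem_insert_self w P), ← add_assoc]
      exact hP
    · obtain ⟨P, hP⟩ := ih hT' _ h
      refine ⟨P.erase w, ?_⟩
      have hcongr : ∑ v ∈ T, (if v ∈ P.erase w then a v else -a v)
          = ∑ v ∈ T, (if v ∈ P then a v else -a v) :=
        sum_congr rfl fun v hv => by
          have : v ≠ w := fun e => hw (e ▸ hv)
          simp [this]
      rw [sum_insert hw, hcongr, if_neg (notMem_erase w P), ← add_assoc]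
      exact hP

/-- Flipping the sign of a single term of a sum. -/
theorem sum_flip_single {V : Type} [DecidableEq V] (b : V → ℤ) (X : Finset V) {w : V}
    (hw : w ∈ X) :
    ∑ v ∈ X, (if v = w then -b v else b v) = ∑ v ∈ X, b v - 2 * b w := by
  rw [← add_sum_erase X _ hw, ← add_sum_erase X b hw, if_pos rfl,
    sum_congr rfl fun v hv => if_neg (ne_of_mem_erase hv)]
  ring

/-- If the sum of `b` over `X` is nonnegative and no change of signs makes it smaller in
absolute value, then the terms smaller than the sum have small total absolute value. -/
theorem sum_abs_small_le_of_minimal {V : Type} [DecidableEq V] (b : V → ℤ) (X : Finset V)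
    (t M : ℤ) (ht : ∑ v ∈ X, b v = t) (ht0 : 0 ≤ t) (hM0 : 0 ≤ M) (hM : ∀ v ∈ X, |b v| ≤ M)
    (hmin : ∀ P : Finset V, t ≤ |∑ v ∈ X, (if v ∈ P then b v else -b v)|) :
    ∑ v ∈ X with |b v| < t, |b v| ≤ M - t := by
  rcases ht0.eq_or_lt with rfl | htpos
  · have : (X.filter fun v => |b v| < 0) = ∅ :=
      filter_eq_empty_iff.2 fun v _ => not_lt.2 (abs_nonneg _)
    simpa [this] using hM0
  have hsmall : ∀ v ∈ X.filter (fun v => |b v| < t), |b v| = -b v := by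
    intro w hw
    obtain ⟨hwX, hwt⟩ := mem_filter.1 hw
    have h := hmin (X.erase w)
    have hcongr : ∑ v ∈ X, (if v ∈ X.erase w then b v else -b v)
        = ∑ v ∈ X, (if v = w then -b v else b v) :=
      sum_congr rfl fun v hv => by by_cases e : v = w <;> simp [e, hv]
    rw [hcongr, sum_flip_single b X hwX, ht, le_abs] at h
    rw [abs_lt] at hwt
    exact abs_of_nonpos (by omega)
  set S := ∑ v ∈ X with |b v| < t, |b v| with hS
  have hS0 : 0 ≤ S := sum_nonneg fun _ _ => abs_nonneg _
  have hsplit := sum_filter_add_sum_filter_not X (fun v => |b v| < t) b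
  have hSb : S = -∑ v ∈ X with |b v| < t, b v := by
    rw [hS, sum_congr rfl hsmall, sum_neg_distrib]
  have hbig : ∑ v ∈ X with ¬ |b v| < t, b v = t + S := by omega
  obtain ⟨w, hw, hwpos⟩ : ∃ w ∈ X.filter (fun v => ¬ |b v| < t), 0 < b w :=
    exists_lt_of_sum_lt (f := fun _ => (0 : ℤ)) (by rw [hbig]; simp; omega)
  have hwM := hM w (mem_filter.1 hw).1
  by_contra! hcon
  have hc : |t + S - 2 * b w| < t + S := by
    rw [abs_of_pos hwpos] at hwM
    rw [abs_lt]
    omega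
  obtain ⟨P, hP⟩ := exists_signs_abs_lt b t _ (fun v hv => (mem_filter.1 hv).2) _ hc
  have h := hmin (((X.filter fun v => ¬ |b v| < t).erase w) ∪ P.filter fun v => |b v| < t)
  rw [← sum_filter_add_sum_filter_not X (fun v => |b v| < t), add_comm] at h
  rw [← hbig, ← sum_flip_single b _ hw] at hP
  refine absurd hP (not_lt.2 (h.trans_eq ?_))
  congr 2
  · refine sum_congr rfl fun v hv => ?_
    obtain ⟨hvX, hvt⟩ := mem_filter.1 hv
    by_cases e : v = w <;> simp_all
  · refine sum_congr rfl fun v hv => ?_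
    obtain ⟨hvX, hvt⟩ := mem_filter.1 hv
    simp [hvt, not_le.2 hvt]

theorem dArcs_eq_sum_left {V : Type} [Fintype V] [DecidableEq V] (A : V → V → Prop)
    [DecidableRel A] (S T : Finset V) : dArcs A S T = ∑ v ∈ S, #{y ∈ T | A v y} := by
  simp only [dArcs, card_filter, sum_product]

theorem dArcs_eq_sum_right {V : Type} [Fintype V] [DecidableEq V] (A : V → V → Prop)
    [DecidableRel A] (S T : Finset V) : dArcs A S T = ∑ v ∈ T, #{y ∈ S | A y v} := by
  simp only [dArcs, card_filter, sum_product_right]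

theorem sVal_eq_abs {V : Type} [Fintype V] (A : V → V → Prop) [DecidableRel A] (x : V) :
    sVal A x = |(outDeg A x : ℤ) - inDeg A x| := by
  rw [sVal, abs_eq_max_neg, neg_sub]

section Independent

variable {V : Type} [Fintype V] [DecidableEq V] {A : V → V → Prop} [DecidableRel A]
  {X Y : Finset V}

theorem not_arc_of_dArcs_self_eq_zero (heX : dArcs A X X = 0) {u v : V} (hu : u ∈ X)
    (hv : v ∈ X) : ¬ A u v := by
  rw [dArcs, card_eq_zero, filter_eq_empty_iff] at heX
  exact heX (mk_mem_product hu hv)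

theorem outDeg_eq_card_filter (hXY : X ∪ Y = univ) (heX : dArcs A X X = 0) {v : V}
    (hv : v ∈ X) : outDeg A v = #{y ∈ Y | A v y} := by
  rw [outDeg]
  congr 1
  ext y
  have hy : y ∈ X ∪ Y := hXY ▸ mem_univ y
  have := fun h : y ∈ X => not_arc_of_dArcs_self_eq_zero heX hv h
  simp only [mem_filter, mem_univ, true_and, mem_union] at hy ⊢
  tauto

theorem inDeg_eq_card_filter (hXY : X ∪ Y = univ) (heX : dArcs A X X = 0) {v : V}
    (hv : v ∈ X) : inDeg A v = #{y ∈ Y | A y v} := by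
  rw [inDeg]
  congr 1
  ext y
  have hy : y ∈ X ∪ Y := hXY ▸ mem_univ y
  have := fun h : y ∈ X => not_arc_of_dArcs_self_eq_zero heX h hv
  simp only [mem_filter, mem_univ, true_and, mem_union] at hy ⊢
  tauto

theorem abs_outDeg_sub_inDeg_le (hXY : X ∪ Y = univ) (heX : dArcs A X X = 0) {v : V}
    (hv : v ∈ X) : |(outDeg A v : ℤ) - inDeg A v| ≤ #Y := by
  rw [outDeg_eq_card_filter hXY heX hv, inDeg_eq_card_filter hXY heX hv, abs_le]
  have h₁ := card_filter_le Y fun y => A v y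
  have h₂ := card_filter_le Y fun y => A y v
  omega

/-- The gap as a signed sum of the values `d⁺(v) − d⁻(v)`. -/
theorem gap_eq_sum (hXY : X ∪ Y = univ) (heX : dArcs A X X = 0) {S₁ S₂ : Finset V}
    (hS : S₁ ∪ S₂ = X) (hd : Disjoint S₁ S₂) :
    gap A S₁ S₂ Y = ∑ v ∈ X, (if v ∈ S₁ then (outDeg A v : ℤ) - inDeg A v
      else -((outDeg A v : ℤ) - inDeg A v)) := by
  have h₁ : ∀ v ∈ S₁, v ∈ X := fun v hv => hS ▸ mem_union_left _ hv
  have h₂ : ∀ v ∈ S₂, v ∈ X := fun v hv => hS ▸ mem_union_right _ hv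
  have e₁ : ∑ v ∈ S₁, (if v ∈ S₁ then (outDeg A v : ℤ) - inDeg A v
      else -((outDeg A v : ℤ) - inDeg A v)) = dArcs A S₁ Y - dArcs A Y S₁ := by
    rw [dArcs_eq_sum_left, dArcs_eq_sum_right]
    push_cast
    rw [← sum_sub_distrib]
    refine sum_congr rfl fun v hv => ?_
    rw [if_pos hv, outDeg_eq_card_filter hXY heX (h₁ v hv),
      inDeg_eq_card_filter hXY heX (h₁ v hv)]
  have e₂ : ∑ v ∈ S₂, (if v ∈ S₁ then (outDeg A v : ℤ) - inDeg A v
      else -((outDeg A v : ℤ) - inDeg A v)) = dArcs A Y S₂ - dArcs A S₂ Y := by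
    rw [dArcs_eq_sum_left A S₂, dArcs_eq_sum_right A Y]
    push_cast
    rw [← sum_sub_distrib]
    refine sum_congr rfl fun v hv => ?_
    rw [if_neg (disjoint_right.1 hd hv), outDeg_eq_card_filter hXY heX (h₂ v hv),
      inDeg_eq_card_filter hXY heX (h₂ v hv), neg_sub]
  rw [← hS, sum_union hd, e₁, e₂, gap]
  ring

end Independent

theorem gap_swap {V : Type} [Fintype V] [DecidableEq V] (A : V → V → Prop) [DecidableRel A]
    (X₁ X₂ Y : Finset V) : gap A X₂ X₁ Y = -gap A X₁ X₂ Y := by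
  simp only [gap]
  ring

/-- Lemma 2.3(2) (Hou–Wu–Yan). -/
theorem stmt4 {V : Type} [Fintype V] [DecidableEq V] (A : V → V → Prop) [DecidableRel A]
    (hirr : ∀ v, ¬ A v v)
    (X Y : Finset V) (hXY : X ∪ Y = Finset.univ) (hdXY : Disjoint X Y)
    (heX : dArcs A X X = 0)
    (X₁ X₂ : Finset V) (hX : X₁ ∪ X₂ = X) (hdisj : Disjoint X₁ X₂)
    (hmin : ∀ S₁ S₂ : Finset V, S₁ ∪ S₂ = X → Disjoint S₁ S₂ →
      |gap A X₁ X₂ Y| ≤ |gap A S₁ S₂ Y|) :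
    ∑ v ∈ X.filter (fun v => sVal A v < |gap A X₁ X₂ Y|), sVal A v ≤
      (Y.card : ℤ) - |gap A X₁ X₂ Y| := by
  wlog hnonneg : 0 ≤ gap A X₁ X₂ Y generalizing X₁ X₂
  · have habs : |gap A X₂ X₁ Y| = |gap A X₁ X₂ Y| := by rw [gap_swap, abs_neg]
    have h := this X₂ X₁ (by rw [union_comm, hX]) hdisj.symm (by rwa [habs])
      (by rw [gap_swap]; omega)
    rwa [habs] at h
  rw [abs_of_nonneg hnonneg] at hmin ⊢
  set t := gap A X₁ X₂ Y with ht
  rw [gap_eq_sum hXY heX hX hdisj] at ht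
  set b : V → ℤ := fun v => if v ∈ X₁ then (outDeg A v : ℤ) - inDeg A v
    else -((outDeg A v : ℤ) - inDeg A v) with hb
  have hs : ∀ v, sVal A v = |b v| := fun v => by
    rw [sVal_eq_abs]
    simp only [hb]
    split_ifs <;> simp only [abs_neg]
  simp only [hs]
  refine sum_abs_small_le_of_minimal b X t _ ht.symm hnonneg (Int.natCast_nonneg _)
    (fun v hv => ?_) fun P => ?_
  · rw [← hs, sVal_eq_abs]
    exact abs_outDeg_sub_inDeg_le hXY heX hv
  · have hU := filter_union_filter_not_eq (fun v => v ∈ P ↔ v ∈ X₁) X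
    have hD := disjoint_filter_filter_not X X (fun v => v ∈ P ↔ v ∈ X₁)
    refine (hmin _ _ hU hD).trans_eq ?_
    rw [gap_eq_sum hXY heX hU hD]
    congr 1
    refine sum_congr rfl fun v hv => ?_
    by_cases h₁ : v ∈ P <;> by_cases h₂ : v ∈ X₁ <;> simp [hb, hv, h₁, h₂]
end

section
/- Let D be a digraph with m arcs and minimum outdegree d ≥ 4, let X, Y be a partition of V(D) with e(X) = 0, and set θ := min{|θ(X₁,X₂)| : X₁,X₂ a partition of X}. Let ε > 0 and suppose every y ∈ Y satisfies d(y) ≤ ε²m/4. Then either there exists a bipartition V(D) = V₁ ∪ V₂ with min{e(V₁,V₂), e(V₂,V₁)} ≥ ((d−1)/(2(2d−1)) − ε)·m, or θ > m/(2d−1). -/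
open Finset

/-- The bilinear form of the adjacency matrix of `A`. -/
noncomputable def arcForm {V : Type} [Fintype V] [DecidableEq V] (A : V → V → Prop)
    [DecidableRel A] : LinearMap.BilinForm ℝ (V → ℝ) :=
  Matrix.toBilin' (Matrix.of fun u v => if A u v then (1 : ℝ) else 0)

/-- The real-valued indicator function of a finite set. -/
def indic {V : Type} [DecidableEq V] (S : Finset V) : V → ℝ := fun v => if v ∈ S then 1 else 0

section ArcForm

variable {V : Type} [Fintype V] [DecidableEq V] (A : V → V → Prop) [DecidableRel A]

theorem arcForm_apply (p q : V → ℝ) :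
    arcForm A p q = ∑ u, ∑ v, if A u v then p u * q v else 0 := by
  simp only [arcForm, Matrix.toBilin'_apply, Matrix.of_apply]
  refine sum_congr rfl fun u _ => sum_congr rfl fun v _ => ?_
  split_ifs <;> simp

theorem arcForm_indic (S T : Finset V) : arcForm A (indic S) (indic T) = dArcs A S T := by
  rw [arcForm_apply, dArcs, card_filter, sum_product]
  push_cast
  rw [← sum_subset (subset_univ S) fun u _ hu => sum_eq_zero fun v _ => by simp [indic, hu]]
  refine sum_congr rfl fun u hu => ?_
  rw [← sum_subset (subset_univ T) fun v _ hv => by simp [indic, hv]]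
  exact sum_congr rfl fun v hv => by simp [indic, hu, hv]

theorem arcForm_single_left (y : V) (q : V → ℝ) :
    arcForm A (Pi.single y 1) q = ∑ v, if A y v then q v else 0 := by
  rw [arcForm_apply, sum_eq_single y]
  · simp
  · intro u _ hu
    simp [Pi.single_eq_of_ne hu]
  · simp

theorem arcForm_single_right (y : V) (p : V → ℝ) :
    arcForm A p (Pi.single y 1) = ∑ u, if A u y then p u else 0 := by
  rw [arcForm_apply]
  refine sum_congr rfl fun u _ => ?_
  rw [sum_eq_single y]
  · simp
  · intro v _ hv
    simp [Pi.single_eq_of_ne hv]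
  · simp

theorem arcForm_single_self {y : V} (hy : ¬ A y y) :
    arcForm A (Pi.single y 1) (Pi.single y 1) = 0 := by
  rw [arcForm_single_left]
  refine sum_eq_zero fun v _ => ?_
  by_cases h : v = y
  · subst h; simp [hy]
  · simp [Pi.single_eq_of_ne h]

theorem arcForm_single_left_mem_Icc (y : V) {q : V → ℝ} (hq : ∀ v, q v ∈ Set.Icc (0 : ℝ) 1) :
    arcForm A (Pi.single y 1) q ∈ Set.Icc (0 : ℝ) (outDeg A y) := by
  rw [arcForm_single_left, outDeg, card_filter]
  push_cast
  constructor
  · exact sum_nonneg fun v _ => by split_ifs; exacts [(hq v).1, le_rfl]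
  · exact sum_le_sum fun v _ => by split_ifs; exacts [(hq v).2, le_rfl]

theorem arcForm_single_right_mem_Icc (y : V) {p : V → ℝ} (hp : ∀ v, p v ∈ Set.Icc (0 : ℝ) 1) :
    arcForm A p (Pi.single y 1) ∈ Set.Icc (0 : ℝ) (inDeg A y) := by
  rw [arcForm_single_right, inDeg, card_filter]
  push_cast
  constructor
  · exact sum_nonneg fun v _ => by split_ifs; exacts [(hp v).1, le_rfl]
  · exact sum_le_sum fun v _ => by split_ifs; exacts [(hp v).2, le_rfl]

theorem sum_deg : ∑ y, deg A y = 2 * dArcs A univ univ := by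
  have h_out : ∑ y, outDeg A y = dArcs A univ univ := by
    simp only [outDeg, dArcs, card_filter, sum_product]
  have h_in : ∑ y, inDeg A y = dArcs A univ univ := by
    simp only [inDeg, dArcs, card_filter, sum_product_right]
  simp only [deg, sum_add_distrib, h_out, h_in, two_mul]

/-- Shifting one coordinate of a fractional cut changes its value linearly. -/
theorem arcForm_shift {y : V} (hy : ¬ A y y) (p q : V → ℝ) (t : ℝ) :
    arcForm A (p + t • Pi.single y 1) (q - t • Pi.single y 1) =
      arcForm A p q + t * (arcForm A (Pi.single y 1) q - arcForm A p (Pi.single y 1)) := by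
  simp only [map_add, map_sub, map_smul, LinearMap.add_apply, LinearMap.smul_apply, smul_eq_mul,
    arcForm_single_self A hy]
  ring

/-- Rounding the half-integral coordinates in `S` of a fractional cut moves its two values by at
most the standard deviation of a uniformly random rounding. -/
theorem exists_rounding (hirr : ∀ v, ¬ A v v) (a b : ℝ) (S : Finset V) :
    ∀ p : V → ℝ, (∀ v, p v ∈ Set.Icc (0 : ℝ) 1) → (∀ v ∈ S, p v = 1 / 2) →
      ∃ q : V → ℝ, (∀ v ∉ S, q v = p v) ∧ (∀ v ∈ S, q v = 0 ∨ q v = 1) ∧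
        (arcForm A q (1 - q) - a) ^ 2 + (arcForm A (1 - q) q - b) ^ 2 ≤
          (arcForm A p (1 - p) - a) ^ 2 + (arcForm A (1 - p) p - b) ^ 2 +
            (∑ y ∈ S, (deg A y : ℝ) ^ 2) / 2 := by
  induction S using Finset.induction_on with
  | empty => exact fun p _ _ => ⟨p, by simp⟩
  | insert y S hyS ih =>
    intro p hp hhalf
    have hpy : p y = 1 / 2 := hhalf y (mem_insert_self y S)
    have hp' : ∀ v, (1 - p) v ∈ Set.Icc (0 : ℝ) 1 := fun v =>
      ⟨by simpa using (hp v).2, by simpa using (hp v).1⟩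
    set L := arcForm A (Pi.single y 1) (1 - p) - arcForm A p (Pi.single y 1)
    set M := arcForm A (Pi.single y 1) p - arcForm A (1 - p) (Pi.single y 1)
    have h_sq : ∀ {s t : ℝ}, s ∈ Set.Icc (0 : ℝ) (outDeg A y) → t ∈ Set.Icc (0 : ℝ) (inDeg A y) →
        (s - t) ^ 2 ≤ (deg A y : ℝ) ^ 2 := by
      intro s t hs ht
      have h_deg : (deg A y : ℝ) = outDeg A y + inDeg A y := by simp [deg]
      rw [h_deg]
      exact sq_le_sq' (by linarith [hs.1, hs.2, ht.2]) (by linarith [hs.2, ht.1, ht.2])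
    have hL2 : L ^ 2 ≤ (deg A y : ℝ) ^ 2 := h_sq (arcForm_single_left_mem_Icc A y hp')
      (arcForm_single_right_mem_Icc A y hp)
    have hM2 : M ^ 2 ≤ (deg A y : ℝ) ^ 2 := h_sq (arcForm_single_left_mem_Icc A y hp)
      (arcForm_single_right_mem_Icc A y hp')
    have h_value : ∀ t : ℝ,
        arcForm A (p + t • Pi.single y 1) (1 - (p + t • Pi.single y 1)) =
            arcForm A p (1 - p) + t * L ∧
          arcForm A (1 - (p + t • Pi.single y 1)) (p + t • Pi.single y 1) =
            arcForm A (1 - p) p - t * M := by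
      intro t
      have h1 := arcForm_shift A (hirr y) p (1 - p) t
      have h2 := arcForm_shift A (hirr y) (1 - p) p (-t)
      rw [sub_sub] at h1
      rw [neg_smul, ← sub_eq_add_neg, sub_neg_eq_add, sub_sub] at h2
      exact ⟨h1, h2.trans (by ring)⟩
    have h_step : ∃ t : ℝ, (t = 1 / 2 ∨ t = -1 / 2) ∧
        (arcForm A p (1 - p) + t * L - a) ^ 2 + (arcForm A (1 - p) p - t * M - b) ^ 2 ≤
          (arcForm A p (1 - p) - a) ^ 2 + (arcForm A (1 - p) p - b) ^ 2 +
            (deg A y : ℝ) ^ 2 / 2 := by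
      by_contra! h
      have h_pos := h _ (Or.inl rfl)
      have h_neg := h _ (Or.inr rfl)
      nlinarith
    obtain ⟨t, ht, h_le⟩ := h_step
    have h_off : ∀ v, v ≠ y → (p + t • Pi.single y 1 : V → ℝ) v = p v := fun v hv => by
      simp [Pi.single_eq_of_ne hv]
    have h_at : (p + t • Pi.single y 1 : V → ℝ) y = 0 ∨
        (p + t • Pi.single y 1 : V → ℝ) y = 1 := by
      rcases ht with rfl | rfl
      · right; simp [hpy]; norm_num
      · left; simp [hpy]; norm_num
    obtain ⟨q, hq_off, hq_int, hq_le⟩ := ih (p + t • Pi.single y 1)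
      (fun v => by
        by_cases hv : v = y
        · subst hv
          rcases h_at with h | h <;> rw [h] <;> simp
        · rw [h_off v hv]; exact hp v)
      (fun v hv => by
        rw [h_off v (ne_of_mem_of_not_mem hv hyS)]
        exact hhalf v (mem_insert_of_mem hv))
    refine ⟨q, fun v hv => ?_, fun v hv => ?_, ?_⟩
    · rw [mem_insert, not_or] at hv
      rw [hq_off v hv.2, h_off v hv.1]
    · rcases mem_insert.1 hv with rfl | hv
      · rwa [hq_off v hyS]
      · exact hq_int v hv
    · rw [(h_value t).1, (h_value t).2] at hq_le
      rw [sum_insert hyS]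
      linarith

end ArcForm

theorem indic_union_of_disjoint {V : Type} [DecidableEq V] {S T : Finset V} (h : Disjoint S T) :
    indic (S ∪ T) = indic S + indic T := by
  ext v
  have h_not : v ∈ S → v ∉ T := fun hS hT => Finset.disjoint_left.1 h hS hT
  by_cases hS : v ∈ S <;> by_cases hT : v ∈ T <;> simp_all [indic]

theorem indic_univ {V : Type} [Fintype V] [DecidableEq V] : indic (univ : Finset V) = 1 := by
  ext v
  simp [indic]

/-- Lemma 3.1(1). -/
theorem stmt5 {V : Type} [Fintype V] [DecidableEq V] (A : V → V → Prop) [DecidableRel A]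
    (hirr : ∀ v, ¬ A v v)
    (m : ℕ) (hm : m = dArcs A Finset.univ Finset.univ)
    (d : ℕ) (hd : 4 ≤ d) (hout : ∀ x, d ≤ outDeg A x)
    (X Y : Finset V) (hXY : X ∪ Y = Finset.univ) (hdXY : Disjoint X Y)
    (heX : dArcs A X X = 0)
    (θ : ℤ) (hθ : IsLeast {t : ℤ | ∃ X₁ ⊆ X, t = |gap A X₁ (X \ X₁) Y|} θ)
    (ε : ℝ) (hε : 0 < ε) (hdeg : ∀ y ∈ Y, (deg A y : ℝ) ≤ ε ^ 2 * m / 4)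
    :
    (∃ V₁ V₂ : Finset V, V₁ ∪ V₂ = Finset.univ ∧ Disjoint V₁ V₂ ∧
        (((d : ℝ) - 1) / (2 * (2 * (d : ℝ) - 1)) - ε) * m ≤
          min (dArcs A V₁ V₂ : ℝ) (dArcs A V₂ V₁ : ℝ)) ∨
      (m : ℝ) / (2 * (d : ℝ) - 1) < (θ : ℝ) := by
  obtain ⟨⟨X₁, hX₁, h_gap⟩, -⟩ := hθ
  rw [or_iff_not_imp_right, not_lt]
  intro hθ_le
  set X₂ := X \ X₁
  have hX : indic X = indic X₁ + indic X₂ := by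
    rw [← indic_union_of_disjoint disjoint_sdiff, union_sdiff_of_subset hX₁]
  have h_one : (1 : V → ℝ) = indic X₁ + indic X₂ + indic Y := by
    rw [← indic_univ, ← hXY, indic_union_of_disjoint hdXY, hX]
  set p : V → ℝ := indic X₁ + (1 / 2 : ℝ) • indic Y with hp
  have hp_compl : 1 - p = indic X₂ + (1 / 2 : ℝ) • indic Y := by
    rw [h_one, hp]
    module
  have hX₁Y : ∀ v ∈ Y, v ∉ X₁ := fun v hv hv' => disjoint_left.1 hdXY (hX₁ hv') hv
  have hpY : ∀ v ∈ Y, p v = 1 / 2 := fun v hv => by simp [hp, indic, hv, hX₁Y v hv]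
  have hpX : ∀ v ∉ Y, p v = 0 ∨ p v = 1 := fun v hv => by
    by_cases h : v ∈ X₁ <;> simp [hp, indic, hv, h]
  have hp_mem : ∀ v, p v ∈ Set.Icc (0 : ℝ) 1 := fun v => by
    by_cases hv : v ∈ Y
    · rw [hpY v hv]; norm_num
    · rcases hpX v hv with h | h <;> rw [h] <;> simp
  obtain ⟨q, hq_off, hq_int, hq_le⟩ := exists_rounding A hirr (arcForm A p (1 - p))
    (arcForm A (1 - p) p) Y p hp_mem hpY
  have hq01 : ∀ v, q v = 0 ∨ q v = 1 := fun v => by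
    by_cases hv : v ∈ Y
    · exact hq_int v hv
    · rw [hq_off v hv]; exact hpX v hv
  have h_sum : (∑ y ∈ Y, (deg A y : ℝ) ^ 2) ≤ ε ^ 2 * m / 4 * (2 * m) := by
    have h_total : ∑ y ∈ Y, (deg A y : ℝ) ≤ 2 * m := by
      have h_le : ∑ y ∈ Y, deg A y ≤ 2 * m := by
        rw [hm, ← sum_deg]
        exact sum_le_sum_of_subset (subset_univ Y)
      exact_mod_cast h_le
    calc ∑ y ∈ Y, (deg A y : ℝ) ^ 2 ≤ ∑ y ∈ Y, ε ^ 2 * m / 4 * deg A y :=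
          sum_le_sum fun y hy => by
            rw [sq]
            exact mul_le_mul_of_nonneg_right (hdeg y hy) (Nat.cast_nonneg _)
      _ = ε ^ 2 * m / 4 * ∑ y ∈ Y, (deg A y : ℝ) := (mul_sum _ _ _).symm
      _ ≤ _ := mul_le_mul_of_nonneg_left h_total (by positivity)
  have h_dev : ∀ s t : ℝ, s ^ 2 + t ^ 2 ≤ ε ^ 2 * m ^ 2 → -(ε * m) ≤ s ∧ -(ε * m) ≤ t := by
    intro s t hst
    have hεm : 0 ≤ ε * m := by positivity
    exact ⟨(abs_le_of_sq_le_sq' (by nlinarith [sq_nonneg t]) hεm).1,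
      (abs_le_of_sq_le_sq' (by nlinarith [sq_nonneg s]) hεm).1⟩
  obtain ⟨h_dev₁, h_dev₂⟩ := h_dev _ _ (hq_le.trans (by nlinarith [sq_nonneg (ε * m)]))
  have h_count : (m : ℝ) = dArcs A X₁ Y + dArcs A X₂ Y + (dArcs A Y X₁ + dArcs A Y X₂) +
      dArcs A Y Y := by
    have h_zero : arcForm A (indic X) (indic X) = 0 := by rw [arcForm_indic, heX, Nat.cast_zero]
    rw [hm, ← arcForm_indic, indic_univ, h_one, ← hX]
    simp only [map_add, LinearMap.add_apply, h_zero]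
    rw [hX]
    simp only [map_add, LinearMap.add_apply, arcForm_indic]
    ring
  have h_fwd : (dArcs A X₁ Y + dArcs A Y X₂ : ℝ) / 2 + dArcs A Y Y / 4 ≤ arcForm A p (1 - p) := by
    rw [hp_compl, hp]
    simp only [map_add, map_smul, LinearMap.add_apply, LinearMap.smul_apply, smul_eq_mul,
      arcForm_indic]
    linarith [Nat.cast_nonneg (α := ℝ) (dArcs A X₁ X₂)]
  have h_bwd : (dArcs A X₂ Y + dArcs A Y X₁ : ℝ) / 2 + dArcs A Y Y / 4 ≤ arcForm A (1 - p) p := by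
    rw [hp_compl, hp]
    simp only [map_add, map_smul, LinearMap.add_apply, LinearMap.smul_apply, smul_eq_mul,
      arcForm_indic]
    linarith [Nat.cast_nonneg (α := ℝ) (dArcs A X₂ X₁)]
  have h_abs : |(dArcs A X₁ Y + dArcs A Y X₂ : ℝ) - (dArcs A X₂ Y + dArcs A Y X₁)| ≤
      m / (2 * (d : ℝ) - 1) := by
    refine le_trans (le_of_eq ?_) hθ_le
    rw [h_gap, gap]
    push_cast
    rfl
  obtain ⟨h_lower, h_upper⟩ := abs_le.1 h_abs
  have h_const : ((d : ℝ) - 1) / (2 * (2 * (d : ℝ) - 1)) * m =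
      m / 4 - m / (2 * (d : ℝ) - 1) / 4 := by
    have hd' : (4 : ℝ) ≤ d := by exact_mod_cast hd
    obtain ⟨x, hx⟩ : ∃ x : ℝ, x = 2 * (d : ℝ) - 1 := ⟨_, rfl⟩
    have h_ne : x ≠ 0 := by linarith
    rw [← hx, show (d : ℝ) = (x + 1) / 2 by linarith]
    field_simp
    ring
  set V₁ := univ.filter fun v => q v = 1 with hV₁
  have hq_eq : q = indic V₁ := by
    ext v
    rcases hq01 v with h | h <;> simp [hV₁, indic, h]
  have hq_compl : 1 - q = indic V₁ᶜ := by
    rw [hq_eq, sub_eq_iff_eq_add', ← indic_union_of_disjoint disjoint_compl_right,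
      union_compl, indic_univ]
  rw [hq_compl, hq_eq, arcForm_indic] at h_dev₁ h_dev₂
  refine ⟨V₁, V₁ᶜ, union_compl V₁, disjoint_compl_right, ?_⟩
  rw [sub_mul, h_const]
  exact le_min (by linarith) (by linarith)
end
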